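/- For every fixed integer m ≥ 3 there exist a constant C_m > 0 and n₀ such that for all n ≥ n₀, the online Ramsey number satisfies r̃(m,n) ≤ C_m · n^m/(log n)^(⌊m/2⌋ − 1), where log denotes the natural logarithm. -/

import Mathlib

open scoped Classical

namespace OnlineRamseyGame

/-- A valid Builder strategy: it never builds a loop, and along any play the
edges built are pairwise distinct. -/
def ValidBuilder {V : Type*} (B : List Bool → Sym2 V) : Prop :=
  (∀ h : List Bool, ¬ (B h).IsDiag) ∧
  ∀ h : List Bool, ∀ i : ℕ, i < h.length → B (h.take i) ≠ B h

/-- The history of Painter's colors after `t` turns against Painter strategy `P`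
(Builder's moves are determined by this history). -/
def histOf (P : List Bool → Bool) : ℕ → List Bool
  | 0 => []
  | t + 1 => histOf P t ++ [P (histOf P t)]

/-- The graph built by `edge` contains a monochromatic clique on `k` vertices in
color `col` within the first `N` turns. -/
def HasMonoClique {V : Type*} (edge : ℕ → Sym2 V) (color : ℕ → Bool)
    (N k : ℕ) (col : Bool) : Prop :=
  ∃ S : Finset V, S.card = k ∧
    ∀ u ∈ S, ∀ v ∈ S, u ≠ v → ∃ t, t < N ∧ edge t = s(u, v) ∧ color t = col

/-- Builder has a valid strategy winning the `(m,n)` online Ramsey game within `N`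
turns against every Painter strategy (red = `true`, blue = `false`). -/
def BuilderWins (m n N : ℕ) : Prop :=
  ∃ B : List Bool → Sym2 ℕ, ValidBuilder B ∧
    ∀ P : List Bool → Bool,
      HasMonoClique (fun t => B (histOf P t)) (fun t => P (histOf P t)) N m true ∨
      HasMonoClique (fun t => B (histOf P t)) (fun t => P (histOf P t)) N n false

/-- The online Ramsey number `r̃(m,n)`: the least `N` such that Builder can
guarantee a win within `N` turns. -/
noncomputable def onlineRamsey (m n : ℕ) : ℕ := sInf {N | BuilderWins m n N}

/-!
Suppose Builder can win the game for `m = j` on any set of `a` vertices. On a set of `n * a`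
vertices he joins one vertex to all the others. Either at least `a` of these edges are red, and he
plays for `j` among the red neighbors, or he repeats the step on `(n - 1) * a` blue neighbors; the
latter can happen only `n` times before a blue clique on `n` vertices appears. So `m` increases by
one while the size of the vertex set is multiplied by `n`, at a cost of `n ^ 2 * a` edges.

The recursion starts at `m = k + 1`, where Builder simply builds all edges of a set whose size is at
least the Ramsey number `r(k + 1, n)`; with `k = ⌊m / 2⌋` for the final `m`, this quadratic cost is
not dominant. The logarithms come from `r(k + 1, n) = O(n ^ k / (log n) ^ (k - 1))`, which follows
by induction on `k` from a lower bound on the average size of an independent set in the hard-core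
model at fugacity `1 / D`, on graphs of maximum degree `d` in which any two adjacent vertices have
at most `D` common neighbors.
-/

/-! ### Independent sets and the hard-core model -/

section HardCore

open Finset

variable {α : Type*} (G : SimpleGraph α)

/-- The independent sets of `G` contained in `X`: the configurations of the hard-core model on the
subgraph of `G` induced on `X`. -/
noncomputable def indepSets (X : Finset α) : Finset (Finset α) := {S ∈ X.powerset | G.IsIndepSet S}

/-- The partition function of the hard-core model on `X` at fugacity `z`. -/
noncomputable def partitionFn (X : Finset α) (z : ℝ) : ℝ := ∑ S ∈ indepSets G X, z ^ #S

/-- The sum of the sizes of the hard-core configurations on `X`, weighted at fugacity `z`.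
It is not normalized: the expected size is its quotient by `partitionFn G X z`. -/
noncomputable def occupancySum (X : Finset α) (z : ℝ) : ℝ := ∑ S ∈ indepSets G X, #S * z ^ #S

/-- The neighborhood of `v` inside `X`. -/
noncomputable def neighborsIn (X : Finset α) (v : α) : Finset α := {w ∈ X | G.Adj v w}

/-- The vertices of `X` that the hard-core configuration `J` leaves available, namely those without
a neighbor in `J`. They may belong to `J`. -/
noncomputable def unblocked (X J : Finset α) : Finset α := {u ∈ X | ∀ w ∈ J, ¬ G.Adj w u}

variable {G} {X B C S J : Finset α} {u v w : α} {z d D : ℝ}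

theorem mem_indepSets : S ∈ indepSets G X ↔ S ⊆ X ∧ G.IsIndepSet S := by
  simp only [indepSets, mem_filter, mem_powerset]

theorem mem_neighborsIn : w ∈ neighborsIn G X v ↔ w ∈ X ∧ G.Adj v w := mem_filter

theorem mem_unblocked : u ∈ unblocked G X J ↔ u ∈ X ∧ ∀ w ∈ J, ¬ G.Adj w u := mem_filter

theorem empty_mem_indepSets (G : SimpleGraph α) (X : Finset α) : ∅ ∈ indepSets G X := by
  simp only [mem_indepSets, empty_subset, coe_empty, SimpleGraph.IsIndepSet, Set.pairwise_empty,
    and_self]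

theorem neighborsIn_subset : neighborsIn G X v ⊆ X := filter_subset _ _

theorem neighborsIn_mono (h : B ⊆ C) : neighborsIn G B v ⊆ neighborsIn G C v :=
  filter_subset_filter _ h

theorem coe_neighborsIn : (neighborsIn G X v : Set α) = ↑X ∩ G.neighborSet v := by
  ext w
  simp only [mem_coe, mem_neighborsIn, Set.mem_inter_iff, SimpleGraph.mem_neighborSet]

theorem unblocked_subset : unblocked G X J ⊆ X := filter_subset _ _

theorem isIndepSet_insert (hv : v ∉ S) :
    G.IsIndepSet (insert v S : Finset α) ↔ G.IsIndepSet S ∧ ∀ w ∈ S, ¬ G.Adj w v := by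
  have : Std.Symm fun v w => ¬ G.Adj v w := ⟨fun _ _ h h' => h h'.symm⟩
  rw [coe_insert, SimpleGraph.IsIndepSet, Set.pairwise_insert_of_symm_of_notMem (mem_coe.not.2 hv)]
  simp only [SimpleGraph.IsIndepSet, mem_coe, G.adj_comm v]

theorem one_le_partitionFn (G : SimpleGraph α) (X : Finset α) (hz : 0 ≤ z) :
    1 ≤ partitionFn G X z := by
  simpa only [card_empty, pow_zero, partitionFn] using
    single_le_sum (f := fun S : Finset α => z ^ #S) (fun _ _ => pow_nonneg hz _)
      (empty_mem_indepSets G X)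

theorem partitionFn_le_exp (G : SimpleGraph α) (X : Finset α) (hz : 0 ≤ z) :
    partitionFn G X z ≤ Real.exp (z * #X) :=
  calc partitionFn G X z ≤ ∑ S ∈ X.powerset, z ^ #S :=
        sum_le_sum_of_subset_of_nonneg (filter_subset _ _) fun _ _ _ => pow_nonneg hz _
    _ = (z + 1) ^ #X := by simpa only [one_pow, mul_one] using sum_pow_mul_eq_add_pow z 1 X
    _ ≤ Real.exp z ^ #X := by gcongr; exact Real.add_one_le_exp z
    _ = Real.exp (z * #X) := by rw [← Real.exp_nat_mul, mul_comm]

theorem occupancySum_nonneg (hz : 0 ≤ z) : 0 ≤ occupancySum G X z :=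
  sum_nonneg fun _ _ => mul_nonneg (Nat.cast_nonneg _) (pow_nonneg hz _)

/-- Removing one vertex `u` from a configuration leaves a configuration in which `u` is free. -/
theorem occupancySum_eq_mul_sum_unblocked (G : SimpleGraph α) (X : Finset α) (z : ℝ) :
    occupancySum G X z = z * ∑ T ∈ indepSets G X, #(unblocked G (X \ T) T) * z ^ #T := by
  simp only [occupancySum, ← nsmul_eq_mul, ← sum_const, mul_sum, sum_sigma']
  refine sum_bij' (fun p _ => ⟨p.1.erase p.2, p.2⟩) (fun p _ => ⟨insert p.2 p.1, p.2⟩)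
    ?_ ?_ ?_ ?_ ?_
  · rintro ⟨S, u⟩ h
    simp only [mem_sigma, mem_indepSets, mem_unblocked, mem_sdiff] at h ⊢
    obtain ⟨⟨hSX, hS⟩, hu⟩ := h
    rw [← insert_erase hu, isIndepSet_insert (notMem_erase u S)] at hS
    exact ⟨⟨(erase_subset u S).trans hSX, hS.1⟩, ⟨hSX hu, notMem_erase u S⟩, hS.2⟩
  · rintro ⟨T, u⟩ h
    simp only [mem_sigma, mem_indepSets, mem_unblocked, mem_sdiff] at h ⊢
    obtain ⟨⟨hTX, hT⟩, ⟨huX, huT⟩, hfree⟩ := h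
    exact ⟨⟨insert_subset huX hTX, (isIndepSet_insert huT).2 ⟨hT, hfree⟩⟩, mem_insert_self u T⟩
  · rintro ⟨S, u⟩ h
    simp only [insert_erase (mem_sigma.1 h).2]
  · rintro ⟨T, u⟩ h
    simp only [erase_insert (mem_sdiff.1 (mem_unblocked.1 (mem_sigma.1 h).2).1).2]
  · rintro ⟨S, u⟩ h
    rw [← pow_succ', card_erase_add_one (mem_sigma.1 h).2]

theorem card_le_card_unblocked_add (hdeg : ∀ u ∈ X, (#(neighborsIn G X u) : ℝ) ≤ D)
    {T : Finset α} (hT : T ⊆ X) : (#X : ℝ) ≤ #(unblocked G (X \ T) T) + (D + 1) * #T := by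
  have hcover : X ⊆ unblocked G (X \ T) T ∪ T.biUnion fun w => insert w (neighborsIn G X w) := by
    intro u hu
    simp only [mem_union, mem_unblocked, mem_sdiff, mem_biUnion, mem_insert, mem_neighborsIn]
    grind
  have hblocked : (#(T.biUnion fun w => insert w (neighborsIn G X w)) : ℝ) ≤ (D + 1) * #T :=
    calc (#(T.biUnion fun w => insert w (neighborsIn G X w)) : ℝ)
        ≤ ∑ w ∈ T, (#(insert w (neighborsIn G X w)) : ℝ) := mod_cast card_biUnion_le
      _ ≤ ∑ _w ∈ T, (D + 1) := sum_le_sum fun w hw =>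
          (mod_cast card_insert_le w _ : (#(insert w (neighborsIn G X w)) : ℝ)
            ≤ #(neighborsIn G X w) + 1).trans (by linarith [hdeg w (hT hw)])
      _ = (D + 1) * #T := by rw [sum_const, nsmul_eq_mul, mul_comm]
  have hcard : (#X : ℝ) ≤ #(unblocked G (X \ T) T)
      + #(T.biUnion fun w => insert w (neighborsIn G X w)) :=
    mod_cast (card_le_card hcover).trans (card_union_le _ _)
  linarith

theorem mul_card_mul_partitionFn_le (hz : 0 ≤ z)
    (hdeg : ∀ u ∈ X, (#(neighborsIn G X u) : ℝ) ≤ D) :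
    z * #X * partitionFn G X z ≤ (1 + z * (D + 1)) * occupancySum G X z := by
  have hfree : #X * partitionFn G X z - (D + 1) * occupancySum G X z
      ≤ ∑ T ∈ indepSets G X, #(unblocked G (X \ T) T) * z ^ #T := by
    rw [partitionFn, occupancySum, mul_sum, mul_sum, ← sum_sub_distrib]
    refine sum_le_sum fun T hT => ?_
    rw [← mul_assoc, ← sub_mul]
    gcongr
    linarith [card_le_card_unblocked_add hdeg (mem_indepSets.1 hT).1]
  have h := mul_le_mul_of_nonneg_left hfree hz
  rw [← occupancySum_eq_mul_sum_unblocked] at h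
  linarith

/-- If `X` is large then the configurations are large on average, and otherwise the partition
function is small. -/
theorem log_mul_partitionFn_le {t : ℝ} (ht : 0 < t) (hz : 0 ≤ z) (hzD : z * (D + 1) ≤ 2)
    (hdeg : ∀ u ∈ X, (#(neighborsIn G X u) : ℝ) ≤ D) :
    Real.log t / 6 * partitionFn G X z ≤ t + occupancySum G X z := by
  have hZ := one_le_partitionFn G X hz
  have hM := occupancySum_nonneg (G := G) (X := X) hz
  rcases le_or_gt (Real.log t / 2) (z * #X) with hlarge | hsmall
  · have hocc : z * #X * partitionFn G X z ≤ 3 * occupancySum G X z :=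
      (mul_card_mul_partitionFn_le hz hdeg).trans (by gcongr; linarith)
    have := mul_le_mul_of_nonneg_right hlarge (by linarith : 0 ≤ partitionFn G X z)
    linarith
  · have hlog_le : Real.log t / 2 ≤ Real.exp (Real.log t / 2) := by
      linarith [Real.add_one_le_exp (Real.log t / 2)]
    have hZ_le : partitionFn G X z ≤ Real.exp (Real.log t / 2) :=
      (partitionFn_le_exp G X hz).trans (Real.exp_le_exp.2 hsmall.le)
    have hprod : Real.log t / 2 * partitionFn G X z ≤ t :=
      calc Real.log t / 2 * partitionFn G X z
          ≤ Real.exp (Real.log t / 2) * Real.exp (Real.log t / 2) :=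
            mul_le_mul hlog_le hZ_le (by linarith) (Real.exp_nonneg _)
        _ = t := by rw [← Real.exp_add, add_halves, Real.exp_log ht]
    linarith

/-- The spatial Markov property of the hard-core model: given the configuration `J` on `B`, the
rest is a hard-core configuration on the vertices of `C` not blocked by `J`. -/
theorem sum_indepSets_union {M : Type*} [AddCommMonoid M] (G : SimpleGraph α) (hBC : Disjoint B C)
    (f : Finset α → M) :
    ∑ I ∈ indepSets G (B ∪ C), f I
      = ∑ J ∈ indepSets G B, ∑ S ∈ indepSets G (unblocked G C J), f (J ∪ S) := by
  rw [sum_sigma']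
  refine sum_bij' (fun I _ => ⟨I ∩ B, I ∩ C⟩) (fun p _ => p.1 ∪ p.2) ?_ ?_ ?_ ?_ ?_
  · intro I hI
    obtain ⟨-, hI⟩ := mem_indepSets.1 hI
    simp only [mem_sigma, mem_indepSets]
    refine ⟨⟨inter_subset_right, hI.mono (by simp)⟩, fun u hu => ?_, hI.mono (by simp)⟩
    obtain ⟨huI, huC⟩ := mem_inter.1 hu
    refine mem_unblocked.2 ⟨huC, fun w hw hwu => ?_⟩
    exact hI (mem_inter.1 hw).1 huI hwu.ne hwu
  · rintro ⟨J, S⟩ h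
    simp only [mem_sigma, mem_indepSets] at h ⊢
    obtain ⟨⟨hJB, hJ⟩, hSC, hS⟩ := h
    refine ⟨union_subset_union hJB (hSC.trans unblocked_subset), ?_⟩
    have : Std.Symm fun v w => ¬ G.Adj v w := ⟨fun _ _ h h' => h h'.symm⟩
    rw [coe_union, SimpleGraph.IsIndepSet, Set.pairwise_union_of_symm]
    exact ⟨hJ, hS, fun w hw u hu _ => (mem_unblocked.1 (hSC hu)).2 w hw⟩
  · intro I hI
    rw [← inter_union_distrib_left, inter_eq_left.2 (mem_indepSets.1 hI).1]
  · rintro ⟨J, S⟩ h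
    simp only [mem_sigma, mem_indepSets] at h
    have hSC := h.2.1.trans unblocked_subset
    have hJC := hBC.mono_left h.1.1
    have hSB := hBC.symm.mono_left hSC
    simp only [union_inter_distrib_right, inter_eq_left.2 h.1.1, inter_eq_left.2 hSC,
      disjoint_iff_inter_eq_empty.1 hJC, disjoint_iff_inter_eq_empty.1 hSB, union_empty,
      empty_union]
  · intro I hI
    rw [← inter_union_distrib_left, inter_eq_left.2 (mem_indepSets.1 hI).1]

theorem sum_indepSets_insert_of_adj {M : Type*} [AddCommMonoid M] (hv : ∀ u ∈ X, G.Adj v u)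
    (f : Finset α → M) :
    ∑ S ∈ indepSets G (insert v X), f S = f {v} + ∑ S ∈ indepSets G X, f S := by
  have hvX : v ∉ X := fun h => (hv v h).ne rfl
  have h_insert : indepSets G (insert v X) = insert {v} (indepSets G X) := by
    ext S
    simp only [mem_insert, mem_indepSets]
    by_cases hvS : v ∈ S
    · have hSX : ¬ S ⊆ X := fun h => hvX (h hvS)
      simp only [hSX, false_and, or_false]
      constructor
      · rintro ⟨hSX, hS⟩
        refine eq_singleton_iff_unique_mem.2 ⟨hvS, fun u hu => by_contra fun huv => ?_⟩
        exact hS hvS hu (Ne.symm huv) (hv u (mem_of_mem_insert_of_ne (hSX hu) huv))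
      · rintro rfl
        simp [SimpleGraph.IsIndepSet]
    · have hSv : S ≠ {v} := fun h => hvS (h ▸ mem_singleton_self v)
      rw [subset_insert_iff_of_notMem hvS]
      simp only [hSv, false_or]
  rw [h_insert, sum_insert fun h => hvX ((mem_indepSets.1 h).1 (mem_singleton_self v))]

variable (G d) in
/-- The local score of a configuration `I` at `v`: a vertex of `I` scores `d`, and moreover every
vertex scores the number of its neighbors in `I`. Summed over all vertices, this counts every
vertex of `I` at most `2 * d` times when the degrees are at most `d`. -/
noncomputable def score (I : Finset α) (v : α) : ℝ :=
  (if v ∈ I then d else 0) + #(neighborsIn G I v)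

theorem sum_score_le {A I : Finset α} (hI : I ⊆ A)
    (hdeg : ∀ u ∈ A, (#(neighborsIn G A u) : ℝ) ≤ d) :
    ∑ v ∈ A, score G d I v ≤ 2 * d * #I := by
  have hmem : ∑ v ∈ A, (if v ∈ I then d else 0) = d * #I := by
    rw [← sum_filter, filter_mem_eq_inter, inter_eq_right.2 hI, sum_const, nsmul_eq_mul, mul_comm]
  have hnbr : ∑ v ∈ A, (#(neighborsIn G I v) : ℝ) ≤ d * #I :=
    calc ∑ v ∈ A, (#(neighborsIn G I v) : ℝ)
        = ∑ w ∈ I, (#{v ∈ A | G.Adj v w} : ℝ) :=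
          mod_cast sum_card_bipartiteAbove_eq_sum_card_bipartiteBelow (s := A) (t := I) G.Adj
      _ ≤ ∑ _w ∈ I, d := sum_le_sum fun w hw => by
          simpa only [neighborsIn, G.adj_comm w] using hdeg w (hI hw)
      _ = d * #I := by rw [sum_const, nsmul_eq_mul, mul_comm]
  simp only [score, sum_add_distrib]
  linarith

/-- The local estimate on a star: the center scores `d`, and a configuration among the leaves scores
its size. -/
theorem log_mul_sum_le_sum_score_of_adj (hD : 1 ≤ D) (hDd : D ≤ d) (hv : ∀ u ∈ X, G.Adj v u)
    (hdeg : ∀ u ∈ X, (#(neighborsIn G X u) : ℝ) ≤ D) :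
    Real.log (d / D) / 12 * partitionFn G (insert v X) (1 / D)
      ≤ ∑ S ∈ indepSets G (insert v X), score G d S v * (1 / D) ^ #S := by
  have hD0 : 0 < D := by linarith
  have hlog : 0 ≤ Real.log (d / D) := Real.log_nonneg ((one_le_div hD0).2 hDd)
  have hz : 1 / D ≤ 1 := (div_le_one hD0).2 hD
  have hZ : 1 ≤ partitionFn G X (1 / D) := one_le_partitionFn G X (by positivity)
  have hcenter : score G d {v} v = d := by simp [score, neighborsIn, filter_singleton]
  have hleaves : ∀ S ∈ indepSets G X, score G d S v = #S := by
    intro S hS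
    have hSX := (mem_indepSets.1 hS).1
    have hvS : v ∉ S := fun h => (hv v (hSX h)).ne rfl
    rw [score, if_neg hvS, zero_add, neighborsIn, filter_true_of_mem fun u hu => hv u (hSX hu)]
  have hocc : ∑ S ∈ indepSets G X, score G d S v * (1 / D) ^ #S = occupancySum G X (1 / D) :=
    sum_congr rfl fun S hS => by rw [hleaves S hS]
  rw [partitionFn, sum_indepSets_insert_of_adj hv, sum_indepSets_insert_of_adj hv, hcenter, hocc,
    ← partitionFn, card_singleton, pow_one]
  calc Real.log (d / D) / 12 * (1 / D + partitionFn G X (1 / D))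
      ≤ Real.log (d / D) / 12 * (2 * partitionFn G X (1 / D)) := by gcongr; linarith
    _ = Real.log (d / D) / 6 * partitionFn G X (1 / D) := by ring
    _ ≤ d / D + occupancySum G X (1 / D) := by
        refine log_mul_partitionFn_le (div_pos (by linarith) hD0) (by positivity) ?_ hdeg
        rw [mul_add, one_div_mul_cancel hD0.ne']
        linarith
    _ = d * (1 / D) + occupancySum G X (1 / D) := by ring

theorem log_mul_partitionFn_le_sum_score {A : Finset α} (hD : 1 ≤ D) (hDd : D ≤ d) (hvA : v ∈ A)
    (hdeg : ∀ u ∈ neighborsIn G A v, (#(neighborsIn G (neighborsIn G A v) u) : ℝ) ≤ D) :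
    Real.log (d / D) / 12 * partitionFn G A (1 / D)
      ≤ ∑ I ∈ indepSets G A, score G d I v * (1 / D) ^ #I := by
  set C := insert v (neighborsIn G A v) with hC
  have hCA : C ⊆ A := insert_subset hvA neighborsIn_subset
  rw [partitionFn, ← sdiff_union_of_subset hCA, sum_indepSets_union G sdiff_disjoint,
    sum_indepSets_union G sdiff_disjoint, mul_sum]
  refine sum_le_sum fun J hJ => ?_
  obtain ⟨hJA, -⟩ := mem_indepSets.1 hJ
  have hJC : Disjoint J C := sdiff_disjoint.mono_left hJA
  have hvJ : v ∉ J := fun h => disjoint_left.1 hJC h (mem_insert_self _ _)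
  have hJv : ∀ w ∈ J, ¬ G.Adj v w := fun w hw hvw => disjoint_left.1 hJC hw
    (mem_insert_of_mem (mem_neighborsIn.2 ⟨(mem_sdiff.1 (hJA hw)).1, hvw⟩))
  set X := unblocked G (neighborsIn G A v) J with hX
  have hstar : unblocked G C J = insert v X := by
    rw [hC, unblocked, filter_insert, if_pos fun w hw h => hJv w hw h.symm, hX, unblocked]
  have hcard : ∀ S ∈ indepSets G (insert v X), #(J ∪ S) = #J + #S := fun S hS =>
    card_union_of_disjoint (hJC.mono_right (((mem_indepSets.1 hS).1.trans hstar.ge).trans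
      unblocked_subset))
  have hscore : ∀ S, score G d (J ∪ S) v = score G d S v := fun S => by
    rw [score, score, neighborsIn, filter_union, filter_false_of_mem hJv, empty_union]
    simp only [mem_union, hvJ, false_or, neighborsIn]
  have hlocal := log_mul_sum_le_sum_score_of_adj (X := X) hD hDd
    (fun u hu => (mem_neighborsIn.1 (unblocked_subset hu)).2) fun u hu =>
      (Nat.cast_le.2 (card_le_card (neighborsIn_mono unblocked_subset))).trans
        (hdeg u (unblocked_subset hu))
  rw [hstar]
  calc Real.log (d / D) / 12 * ∑ S ∈ indepSets G (insert v X), (1 / D) ^ #(J ∪ S)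
      = (1 / D) ^ #J * (Real.log (d / D) / 12 * partitionFn G (insert v X) (1 / D)) := by
        rw [sum_congr rfl fun S hS => by rw [hcard S hS, pow_add], ← mul_sum, partitionFn]
        ring
    _ ≤ (1 / D) ^ #J * ∑ S ∈ indepSets G (insert v X), score G d S v * (1 / D) ^ #S := by
        gcongr
    _ = ∑ S ∈ indepSets G (insert v X), score G d (J ∪ S) v * (1 / D) ^ #(J ∪ S) := by
        rw [mul_sum]
        refine sum_congr rfl fun S hS => ?_
        rw [hcard S hS, hscore, pow_add]
        ring

theorem exists_isIndepSet_of_codegree_le {A : Finset α} (hD : 1 ≤ D) (hDd : D ≤ d)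
    (hdeg : ∀ v ∈ A, (#(neighborsIn G A v) : ℝ) ≤ d)
    (hcodeg : ∀ v ∈ A, ∀ u ∈ neighborsIn G A v,
      (#(neighborsIn G (neighborsIn G A v) u) : ℝ) ≤ D) :
    ∃ I ⊆ A, G.IsIndepSet I ∧ #A * Real.log (d / D) ≤ 24 * d * #I := by
  have haverage : ∑ I ∈ indepSets G A, (#A * (Real.log (d / D) / 12)) * (1 / D) ^ #I
      ≤ ∑ I ∈ indepSets G A, (∑ v ∈ A, score G d I v) * (1 / D) ^ #I :=
    calc _ = ∑ _v ∈ A, Real.log (d / D) / 12 * partitionFn G A (1 / D) := by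
          rw [← mul_sum, sum_const, nsmul_eq_mul, partitionFn]
          ring
      _ ≤ ∑ v ∈ A, ∑ I ∈ indepSets G A, score G d I v * (1 / D) ^ #I :=
          sum_le_sum fun v hv => log_mul_partitionFn_le_sum_score hD hDd hv (hcodeg v hv)
      _ = _ := by
          rw [sum_comm]
          simp only [sum_mul]
  obtain ⟨I, hI, hscore⟩ := exists_le_of_sum_le ⟨∅, empty_mem_indepSets G A⟩ haverage
  obtain ⟨hIA, hI⟩ := mem_indepSets.1 hI
  have hscore := le_of_mul_le_mul_right hscore (pow_pos (by positivity) _)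
  exact ⟨I, hIA, hI, by linarith [sum_score_le hIA hdeg]⟩

end HardCore

/-! ### The Ramsey number bound -/

section Ramsey

open Finset

/-- An upper bound for the Ramsey number `r(k + 1, n)`, of order `n ^ k / (log n) ^ (k - 1)`. In the
recursion the ratio of consecutive values is at least `√n`, whose logarithm is `log n / 2`; this
turns the constant 24 of `exists_isIndepSet_of_codegree_le` into 48. -/
noncomputable def ramseyBound (n : ℕ) : ℕ → ℝ
  | 0 => 1
  | k + 1 => n * (48 * n / Real.log n) ^ k

variable {n : ℕ}

theorem ramseyBound_succ_succ (n k : ℕ) :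
    ramseyBound n (k + 2) = 48 * n / Real.log n * ramseyBound n (k + 1) := by
  simp only [ramseyBound]
  ring

theorem one_le_sqrt_natCast (hn : 2 ≤ n) : 1 ≤ √(n : ℝ) :=
  Real.one_le_sqrt.2 (mod_cast (by omega : 1 ≤ n))

theorem log_natCast_pos (hn : 2 ≤ n) : 0 < Real.log n :=
  Real.log_pos (mod_cast (by omega : 1 < n))

theorem sqrt_le_mul_div_log (hn : 2 ≤ n) : √(n : ℝ) ≤ 48 * n / Real.log n := by
  have hlog : Real.log n ≤ 2 * √n := by
    have h := Real.log_le_sub_one_of_pos (zero_lt_one.trans_le (one_le_sqrt_natCast hn))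
    rw [Real.log_sqrt n.cast_nonneg] at h
    linarith
  rw [le_div_iff₀ (log_natCast_pos hn)]
  calc √n * Real.log n ≤ √n * (2 * √n) := by gcongr
    _ = 2 * n := by rw [mul_left_comm, Real.mul_self_sqrt n.cast_nonneg]
    _ ≤ 48 * n := by gcongr; norm_num

theorem sqrt_mul_ramseyBound_le (hn : 2 ≤ n) (k : ℕ) :
    √n * ramseyBound n k ≤ ramseyBound n (k + 1) := by
  have hsqrt := one_le_sqrt_natCast hn
  rcases k with _ | k
  · calc √n * 1 ≤ √n * √n := by gcongr
      _ = n * (48 * n / Real.log n) ^ 0 := by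
        rw [Real.mul_self_sqrt n.cast_nonneg, pow_zero, mul_one]
  · rw [ramseyBound_succ_succ]
    have hlog := log_natCast_pos hn
    gcongr
    · rw [ramseyBound]
      positivity
    · exact sqrt_le_mul_div_log hn

theorem one_le_ramseyBound (hn : 2 ≤ n) (k : ℕ) : 1 ≤ ramseyBound n k := by
  induction k with
  | zero => exact le_rfl
  | succ k ih =>
    exact (one_le_mul_of_one_le_of_one_le (one_le_sqrt_natCast hn) ih).trans
      (sqrt_mul_ramseyBound_le hn k)

theorem ramseyBound_le_succ (hn : 2 ≤ n) (k : ℕ) : ramseyBound n k ≤ ramseyBound n (k + 1) :=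
  (le_mul_of_one_le_left (zero_le_one.trans (one_le_ramseyBound hn k))
    (one_le_sqrt_natCast hn)).trans (sqrt_mul_ramseyBound_le hn k)

theorem half_log_le_log_ramseyBound_ratio (hn : 2 ≤ n) (k : ℕ) :
    Real.log n / 2 ≤ Real.log (ramseyBound n (k + 1) / ramseyBound n k) := by
  rw [← Real.log_sqrt n.cast_nonneg]
  refine Real.log_le_log (zero_lt_one.trans_le (one_le_sqrt_natCast hn)) ?_
  rw [le_div_iff₀ (zero_lt_one.trans_le (one_le_ramseyBound hn k))]
  exact sqrt_mul_ramseyBound_le hn k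

variable {α : Type*} {G : SimpleGraph α} {A B : Finset α} {v : α} {k : ℕ}

theorem card_lt_of_isIndepSet (hfree : G.IndepSetFreeOn A n) (hBA : B ⊆ A)
    (hB : G.IsIndepSet B) : #B < n := by
  by_contra! hn
  obtain ⟨S, hSB, hS⟩ := exists_subset_card_eq hn
  exact hfree (coe_subset.2 (hSB.trans hBA)) ⟨hB.mono (coe_subset.2 hSB), hS⟩

theorem cliqueFreeOn_neighborsIn (hfree : G.CliqueFreeOn A (k + 1)) (hv : v ∈ A) :
    G.CliqueFreeOn (neighborsIn G A v) k := by
  rw [coe_neighborsIn]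
  exact SimpleGraph.CliqueFreeOn.of_succ _ hfree (mem_coe.2 hv)

theorem card_lt_ramseyBound (hn : 2 ≤ n) (hclique : G.CliqueFreeOn A (k + 1))
    (hindep : G.IndepSetFreeOn A n) : (#A : ℝ) < ramseyBound n k := by
  induction k using Nat.twoStepInduction generalizing A with
  | zero =>
    have hA : A = ∅ := eq_empty_of_forall_notMem fun a ha =>
      hclique (t := {a}) (by simpa using ha) (by simp [SimpleGraph.isNClique_iff])
    simp [hA, ramseyBound]
  | one =>
    have hA : G.IsIndepSet A := (SimpleGraph.cliqueFreeOn_two G).1 hclique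
    simpa [ramseyBound] using card_lt_of_isIndepSet hindep Subset.rfl hA
  | more k ih₀ ih₁ =>
    have hindep_nbr : ∀ {X : Finset α}, G.IndepSetFreeOn X n → ∀ v,
        G.IndepSetFreeOn (neighborsIn G X v) n := fun hX v S hS =>
      hX (hS.trans (coe_subset.2 neighborsIn_subset))
    obtain ⟨I, hIA, hI, hcard⟩ := exists_isIndepSet_of_codegree_le (one_le_ramseyBound hn k)
      (ramseyBound_le_succ hn k)
      (fun v hv => (ih₁ (cliqueFreeOn_neighborsIn hclique hv) (hindep_nbr hindep v)).le)
      (fun v hv u hu => (ih₀ (cliqueFreeOn_neighborsIn (cliqueFreeOn_neighborsIn hclique hv) hu)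
        (hindep_nbr (hindep_nbr hindep v) u)).le)
    have hIn : (#I : ℝ) < n := mod_cast card_lt_of_isIndepSet hindep hIA hI
    have hbound : 0 < ramseyBound n (k + 1) := zero_lt_one.trans_le (one_le_ramseyBound hn _)
    have hlt : #A * (Real.log n / 2) < 24 * ramseyBound n (k + 1) * n :=
      calc #A * (Real.log n / 2)
          ≤ #A * Real.log (ramseyBound n (k + 1) / ramseyBound n k) := by
            gcongr
            exact half_log_le_log_ramseyBound_ratio hn k
        _ ≤ 24 * ramseyBound n (k + 1) * #I := hcard
        _ < 24 * ramseyBound n (k + 1) * n := by gcongr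
    rw [ramseyBound_succ_succ, div_mul_eq_mul_div, lt_div_iff₀ (log_natCast_pos hn)]
    linarith

end Ramsey

/-! ### Positions and strategies -/

section Game

open Finset

/-- A position of the game: the sets of edges built so far, indexed by their color (red is `true`,
blue is `false`). Positions are ordered by inclusion, color by color. -/
abbrev Position (V : Type*) := Bool → Finset (Sym2 V)

variable {V : Type*} {s s' : Position V} {B : List Bool → Sym2 V} {e : Sym2 V} {c : Bool}
  {Q Q' : Position V → Prop} {k l : ℕ}

/-- The position after Builder builds `e` and Painter colors it `c`. -/
noncomputable def paint (s : Position V) (e : Sym2 V) (c : Bool) : Position V :=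
  Function.update s c (insert e (s c))

theorem mem_paint {e' : Sym2 V} {c' : Bool} :
    e' ∈ paint s e c c' ↔ e' = e ∧ c = c' ∨ e' ∈ s c' := by
  by_cases h : c' = c
  · subst h
    simp only [paint, Function.update_self, mem_insert, and_true]
  · simp only [paint, Function.update_of_ne h, Ne.symm h, and_false, false_or]

theorem le_paint (s : Position V) (e : Sym2 V) (c : Bool) : s ≤ paint s e c :=
  fun _ _ h => mem_paint.2 (.inr h)

/-- `CanForce Q k s`: from the position `s`, Builder can force a position satisfying `Q` within `k`
turns. -/
inductive CanForce (Q : Position V → Prop) : ℕ → Position V → Prop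
  | done {k : ℕ} {s : Position V} (h : Q s) : CanForce Q k s
  | move {k : ℕ} {s : Position V} (e : Sym2 V) (hdiag : ¬ e.IsDiag) (hnew : ∀ c, e ∉ s c)
      (h : ∀ c, CanForce Q k (paint s e c)) : CanForce Q (k + 1) s

theorem CanForce.mono (h : CanForce Q k s) (hkl : k ≤ l) : CanForce Q l s := by
  induction h generalizing l with
  | done h => exact .done h
  | move e hdiag hnew _ ih =>
    obtain ⟨l, rfl⟩ := Nat.exists_eq_add_one_of_ne_zero (Nat.ne_zero_of_lt hkl)
    exact .move e hdiag hnew fun c => ih c (Nat.le_of_succ_le_succ hkl)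

theorem CanForce.trans (h : CanForce Q k s) (h' : ∀ s' ≥ s, Q s' → CanForce Q' l s') :
    CanForce Q' (k + l) s := by
  induction h with
  | done h => exact (h' _ le_rfl h).mono (Nat.le_add_left _ _)
  | move e hdiag hnew _ ih =>
    rw [Nat.add_right_comm]
    exact .move e hdiag hnew fun c => ih c fun s' hs' => h' s' ((le_paint _ _ _).trans hs')

theorem CanForce.imp (h : CanForce Q k s) (h' : ∀ s' ≥ s, Q s' → Q' s') : CanForce Q' k s :=
  h.trans (l := 0) fun s' hs' hQ => .done (h' s' hs' hQ)

theorem canForce_exists_mem (s : Position V) (he : ¬ e.IsDiag) :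
    CanForce (fun s' => ∃ c, e ∈ s' c) 1 s := by
  by_cases hold : ∃ c, e ∈ s c
  · exact .done hold
  · exact .move e he (not_exists.1 hold) fun c => .done ⟨c, mem_paint.2 (.inl ⟨rfl, rfl⟩)⟩

theorem canForce_forall_exists_mem (s : Position V) {E : Finset (Sym2 V)}
    (hE : ∀ e ∈ E, ¬ e.IsDiag) : CanForce (fun s' => ∀ e ∈ E, ∃ c, e ∈ s' c) #E s := by
  induction E using Finset.induction with
  | empty => exact .done fun e he => absurd he (notMem_empty e)
  | insert e E heE ih =>
    rw [card_insert_of_notMem heE]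
    refine (ih fun f hf => hE f (mem_insert_of_mem hf)).trans fun s₁ _ h₁ => ?_
    refine (canForce_exists_mem s₁ (hE e (mem_insert_self e E))).imp fun s₂ hs₂ h₂ f hf => ?_
    obtain rfl | hf := mem_insert.1 hf
    · exact h₂
    · exact (h₁ f hf).imp fun c hc => hs₂ c hc

theorem canForce_star (s : Position V) {v : V} {X : Finset V} (hv : v ∉ X) :
    CanForce (fun s' => ∀ u ∈ X, ∃ c, s(v, u) ∈ s' c) #X s := by
  have hdiag : ∀ e ∈ X.image (s(v, ·)), ¬ e.IsDiag := by
    simp only [mem_image, forall_exists_index, and_imp]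
    rintro _ u hu rfl
    exact Sym2.mk_isDiag_iff.not.2 (ne_of_mem_of_not_mem hu hv).symm
  exact ((canForce_forall_exists_mem s hdiag).mono card_image_le).imp fun s' _ h u hu =>
    h _ (mem_image_of_mem _ hu)

theorem canForce_pairs (s : Position V) (A : Finset V) :
    CanForce (fun s' => ∀ u ∈ A, ∀ v ∈ A, u ≠ v → ∃ c, s(u, v) ∈ s' c) ((#A).choose 2) s := by
  have hdiag : ∀ e ∈ A.offDiag.image Sym2.mk.uncurry, ¬ e.IsDiag := by
    simp only [mem_image, forall_exists_index, and_imp]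
    rintro _ ⟨u, v⟩ huv rfl
    exact Sym2.mk_isDiag_iff.not.2 (mem_offDiag.1 huv).2.2
  rw [← Sym2.card_image_offDiag]
  exact (canForce_forall_exists_mem s hdiag).imp fun s' _ h u hu v hv huv =>
    h _ (mem_image_of_mem Sym2.mk.uncurry (mem_offDiag.2 ⟨hu, hv, huv⟩ : (u, v) ∈ A.offDiag))

/-- The position reached from `s` when Builder follows `B` and Painter answers with the colors in
the given history. -/
noncomputable def play (s : Position V) (B : List Bool → Sym2 V) : List Bool → Position V
  | [] => s
  | c :: h => play (paint s (B []) c) (fun h => B (c :: h)) h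

theorem mem_play {h : List Bool} :
    e ∈ play s B h c ↔ e ∈ s c ∨ ∃ i, h[i]? = some c ∧ B (h.take i) = e := by
  induction h generalizing s B with
  | nil => simp only [play, List.getElem?_nil, reduceCtorEq, false_and, exists_false, or_false]
  | cons c' h ih =>
    rw [play, ih, mem_paint, ← Nat.or_exists_add_one (p := fun i => (c' :: h)[i]? = some c ∧ _)]
    simp only [List.getElem?_cons_zero, Option.some.injEq, List.take_zero,
      List.getElem?_cons_succ, List.take_succ_cons, eq_comm (a := e)]
    tauto

theorem le_play (s : Position V) (B : List Bool → Sym2 V) (h : List Bool) : s ≤ play s B h :=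
  fun _ _ he => mem_play.2 (.inl he)

/-- A Builder strategy is legal from the position `s` if it never builds a loop nor an edge that is
already present. -/
def LegalFrom (s : Position V) (B : List Bool → Sym2 V) : Prop :=
  ∀ h, ¬ (B h).IsDiag ∧ ∀ c, B h ∉ play s B h c

theorem LegalFrom.cons {B : Bool → List Bool → Sym2 V} (he : ¬ e.IsDiag) (hnew : ∀ c, e ∉ s c)
    (hB : ∀ c, LegalFrom (paint s e c) (B c)) :
    LegalFrom s fun | [] => e | c :: h => B c h
  | [] => ⟨he, hnew⟩
  | c :: h => hB c h

theorem exists_notMem_position [Infinite V] (s : Position V) :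
    ∃ e : Sym2 V, ¬ e.IsDiag ∧ ∀ c, e ∉ s c := by
  obtain ⟨v⟩ : Nonempty V := inferInstance
  have hinj : Function.Injective (s(v, ·)) := fun u w h => Sym2.congr_right.1 h
  obtain ⟨e, ⟨u, rfl⟩, hu⟩ := (Set.infinite_range_of_injective hinj).exists_notMem_finset
    (insert s(v, v) (s true ∪ s false))
  simp only [mem_insert, mem_union, not_or] at hu
  refine ⟨s(v, u), fun h => hu.1 ?_, Bool.forall_bool.2 ⟨hu.2.2, hu.2.1⟩⟩
  rw [Sym2.mk_isDiag_iff.1 h]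

theorem exists_legalFrom [Infinite V] (s : Position V) : ∃ B, LegalFrom s B := by
  choose next hdiag hnew using exists_notMem_position (V := V)
  refine ⟨fun h => next (h.foldl (fun s c => paint s (next s) c) s), fun h => ⟨hdiag _, ?_⟩⟩
  induction h generalizing s with
  | nil => exact hnew s
  | cons c _ ih => exact ih (paint s (next s) c)

theorem CanForce.exists_legalFrom [Infinite V] (h : CanForce Q k s) (hQ : Monotone Q) :
    ∃ B, LegalFrom s B ∧ ∀ h : List Bool, h.length = k → Q (play s B h) := by
  induction h with
  | done hs =>
    obtain ⟨B, hB⟩ := OnlineRamseyGame.exists_legalFrom (V := V) _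
    exact ⟨B, hB, fun h _ => hQ (le_play _ B h) hs⟩
  | move e hdiag hnew _ ih =>
    choose B hB hQB using ih
    refine ⟨_, .cons hdiag hnew hB, ?_⟩
    rintro (_ | ⟨c, h⟩) hlen
    · cases hlen
    · exact hQB c h (Nat.succ.inj hlen)

theorem LegalFrom.validBuilder (hB : LegalFrom s B) : ValidBuilder B := by
  refine ⟨fun h => (hB h).1, fun h i hi heq => ?_⟩
  exact (hB h).2 h[i] (mem_play.2 (.inr ⟨i, List.getElem?_eq_getElem hi, heq⟩))

theorem length_histOf (P : List Bool → Bool) (N : ℕ) : (histOf P N).length = N := by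
  induction N with
  | zero => rfl
  | succ N ih => rw [histOf, List.length_append, ih, List.length_singleton]

theorem take_histOf (P : List Bool → Bool) {i N : ℕ} (h : i ≤ N) :
    (histOf P N).take i = histOf P i := by
  induction N, h using Nat.le_induction with
  | base => exact List.take_of_length_le (length_histOf P i).le
  | succ N h ih => rw [histOf, List.take_append_of_le_length (by rwa [length_histOf]), ih]

theorem getElem?_histOf (P : List Bool → Bool) {i N : ℕ} (h : i < N) :
    (histOf P N)[i]? = some (P (histOf P i)) := by
  induction N, h using Nat.le_induction with
  | base =>
    rw [histOf, List.getElem?_append_right (length_histOf P i).le, length_histOf, Nat.sub_self,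
      List.getElem?_cons_zero]
  | succ N h ih => rw [histOf, List.getElem?_append_left (by rwa [length_histOf]), ih]

theorem mem_play_histOf {P : List Bool → Bool} {N : ℕ} :
    e ∈ play s B (histOf P N) c ↔
      e ∈ s c ∨ ∃ t, t < N ∧ B (histOf P t) = e ∧ P (histOf P t) = c := by
  refine mem_play.trans (or_congr_right (exists_congr fun t => ?_))
  by_cases ht : t < N
  · rw [getElem?_histOf P ht, take_histOf P ht.le, Option.some.injEq, and_comm]
    simp only [ht, true_and]
  · have hnone : (histOf P N)[t]? = none := by
      rw [List.getElem?_eq_none_iff, length_histOf]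
      exact not_lt.1 ht
    simp only [hnone, reduceCtorEq, ht, false_and]

/-- The graph with edge set `E` has a clique on `k` vertices, all of which lie in `A`. -/
def ContainsClique (E : Finset (Sym2 V)) (A : Finset V) (k : ℕ) : Prop :=
  ∃ S ⊆ A, (SimpleGraph.fromEdgeSet (E : Set (Sym2 V))).IsNClique k S

theorem ContainsClique.mono {E E' : Finset (Sym2 V)} {A A' : Finset V}
    (h : ContainsClique E A k) (hE : E ⊆ E') (hA : A ⊆ A') : ContainsClique E' A' k := by
  obtain ⟨S, hSA, hS⟩ := h
  exact ⟨S, hSA.trans hA, hS.mono (SimpleGraph.fromEdgeSet_mono (coe_subset.2 hE))⟩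

theorem containsClique_zero (E : Finset (Sym2 V)) (A : Finset V) : ContainsClique E A 0 :=
  ⟨∅, empty_subset A, SimpleGraph.isNClique_zero.2 rfl⟩

theorem ContainsClique.succ {E : Finset (Sym2 V)} {A A' : Finset V} {v : V}
    (h : ContainsClique E A k) (hAA' : A ⊆ A') (hv : v ∈ A') (hA : ∀ u ∈ A, u ≠ v ∧ s(v, u) ∈ E) :
    ContainsClique E A' (k + 1) := by
  obtain ⟨S, hSA, hS⟩ := h
  refine ⟨_, insert_subset hv (hSA.trans hAA'), hS.insert fun u hu => ?_⟩
  exact (SimpleGraph.fromEdgeSet_adj _).2 ⟨(hA u (hSA hu)).2, (hA u (hSA hu)).1.symm⟩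

variable {m n : ℕ} {A A' : Finset V}

/-- The winning positions of Builder in the `(m, n)` game, with the additional requirement that the
monochromatic clique lie in `A`. -/
def HasMonoCliqueIn (m n : ℕ) (A : Finset V) (s : Position V) : Prop :=
  ContainsClique (s true) A m ∨ ContainsClique (s false) A n

theorem HasMonoCliqueIn.mono (h : HasMonoCliqueIn m n A s) (hs : s ≤ s') (hA : A ⊆ A') :
    HasMonoCliqueIn m n A' s' :=
  h.imp (·.mono (hs true) hA) (·.mono (hs false) hA)

theorem ContainsClique.hasMonoClique {P : List Bool → Bool} {N : ℕ}
    (h : ContainsClique (play (fun _ => ∅) B (histOf P N) c) A k) :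
    HasMonoClique (fun t => B (histOf P t)) (fun t => P (histOf P t)) N k c := by
  obtain ⟨S, -, hS⟩ := h
  refine ⟨S, hS.card_eq, fun u hu v hv huv => ?_⟩
  have hadj := (SimpleGraph.fromEdgeSet_adj _).1 (hS.isClique hu hv huv)
  exact (mem_play_histOf.1 (mem_coe.1 hadj.1)).resolve_left (notMem_empty _)

theorem builderWins_of_canForce {N : ℕ} {A : Finset ℕ}
    (h : CanForce (HasMonoCliqueIn m n A) N fun _ => ∅) : BuilderWins m n N := by
  obtain ⟨B, hB, hwin⟩ := h.exists_legalFrom fun _ _ hs h => h.mono hs Subset.rfl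
  exact ⟨B, hB.validBuilder, fun P => (hwin _ (length_histOf P N)).imp
    ContainsClique.hasMonoClique ContainsClique.hasMonoClique⟩

end Game

/-! ### The strategy of Builder -/

section Strategy

open Finset

/-- On every set of `a` vertices, Builder can force a red clique on `m` vertices or a blue clique on
`n` vertices within `N` turns, whatever has been built before. -/
def CanWinOn (V : Type*) (m n a N : ℕ) : Prop :=
  ∀ A : Finset V, #A = a → ∀ s : Position V, CanForce (HasMonoCliqueIn m n A) N s

variable {V : Type*} {n k a c i j : ℕ}

theorem canWinOn_of_ramseyBound_le (V : Type*) (hn : 2 ≤ n) (ha : ramseyBound n k ≤ a) :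
    CanWinOn V (k + 1) n a (a.choose 2) := by
  rintro A rfl s
  refine (canForce_pairs s A).imp fun s' _ hall => ?_
  by_contra hwin
  obtain ⟨hred, hblue⟩ := not_or.1 hwin
  refine ha.not_gt (card_lt_ramseyBound (G := .fromEdgeSet (s' true)) hn
    (fun S hS hclique => hred ⟨S, coe_subset.1 hS, hclique⟩) fun S hS hindep => hblue ?_)
  refine ⟨S, coe_subset.1 hS, fun u hu v hv huv => ?_, hindep.card_eq⟩
  have hnot_red : s(u, v) ∉ s' true := fun h =>
    hindep.isIndepSet hu hv huv ((SimpleGraph.fromEdgeSet_adj _).2 ⟨mem_coe.2 h, huv⟩)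
  obtain ⟨_ | _, h⟩ := hall u (hS hu) v (hS hv) huv
  · exact (SimpleGraph.fromEdgeSet_adj _).2 ⟨mem_coe.2 h, huv⟩
  · exact absurd h hnot_red

theorem exists_monochromatic_star {s : Position V} {X : Finset V} {v : V}
    (hstar : ∀ u ∈ X.erase v, ∃ c, s(v, u) ∈ s c) (hX : i + j ≤ #X) :
    (∃ Y ⊆ X, #Y = i ∧ ∀ u ∈ Y, u ≠ v ∧ s(v, u) ∈ s true) ∨
      ∃ Y ⊆ X, #Y = j ∧ ∀ u ∈ Y, u ≠ v ∧ s(v, u) ∈ s false := by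
  let nbrs (c : Bool) : Finset V := {u ∈ X.erase v | s(v, u) ∈ s c}
  have hlarge : ∀ {c k}, k ≤ #(nbrs c) → ∃ Y ⊆ X, #Y = k ∧ ∀ u ∈ Y, u ≠ v ∧ s(v, u) ∈ s c := by
    intro c k hk
    obtain ⟨Y, hY, hYk⟩ := exists_subset_card_eq hk
    exact ⟨Y, hY.trans ((filter_subset _ _).trans (erase_subset v X)), hYk, fun u hu =>
      ⟨ne_of_mem_erase (mem_filter.1 (hY hu)).1, (mem_filter.1 (hY hu)).2⟩⟩
  have hcover : X.erase v ⊆ nbrs true ∪ nbrs false := fun u hu => by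
    simpa only [nbrs, ← filter_or, mem_filter, hu, true_and, Bool.exists_bool, or_comm]
      using hstar u hu
  have hcard := (card_le_card hcover).trans (card_union_le _ _)
  have herase := pred_card_le_card_erase (s := X) (a := v)
  exact (by omega : i ≤ #(nbrs true) ∨ j ≤ #(nbrs false)).imp hlarge hlarge

/-- Builder joins a vertex `v` to all other vertices of `X`. With `a` red neighbors of `v` the
strategy for `j` produces a red clique that `v` extends; otherwise `v` has `i * a` blue neighbors,
among which Builder repeats the step, and `v` extends the blue clique found there. -/
theorem CanWinOn.canForce_or_blue (h : CanWinOn V j n a c) (ha : 0 < a) (i : ℕ) {X : Finset V}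
    (hX : #X = i * a) (s : Position V) :
    CanForce (fun s' => HasMonoCliqueIn (j + 1) n X s' ∨ ContainsClique (s' false) X i)
      (i * (i * a) + c) s := by
  induction i generalizing X s with
  | zero => exact .done (.inr (containsClique_zero _ _))
  | succ i ih =>
    obtain ⟨v, hv⟩ : X.Nonempty := card_pos.1 (hX ▸ by positivity)
    have hcost : #(X.erase v) + (i * (i * a) + c) ≤ (i + 1) * ((i + 1) * a) + c := by
      have := card_erase_le (s := X) (a := v)
      nlinarith
    refine ((canForce_star s (notMem_erase v X)).trans fun s₁ _ hstar => ?_).mono hcost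
    obtain ⟨Y, hYX, hY, hadj⟩ | ⟨Y, hYX, hY, hadj⟩ :=
      exists_monochromatic_star hstar (i := a) (j := i * a) (by rw [hX, add_one_mul, add_comm])
    · refine ((h Y hY s₁).mono (Nat.le_add_left c _)).imp fun s₂ hs₂ hwin => .inl ?_
      exact hwin.imp (·.succ hYX hv fun u hu => (hadj u hu).imp_right (hs₂ true ·))
        (·.mono Subset.rfl hYX)
    · refine (ih hY s₁).imp fun s₂ hs₂ hwin => hwin.imp (·.mono le_rfl hYX) ?_
      exact (·.succ hYX hv fun u hu => (hadj u hu).imp_right (hs₂ false ·))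

theorem CanWinOn.succ (h : CanWinOn V j n a c) (ha : 0 < a) :
    CanWinOn V (j + 1) n (n * a) (n * (n * a) + c) := fun _ hX s =>
  (h.canForce_or_blue ha n hX s).imp fun _ _ hwin => hwin.elim id .inr

theorem CanWinOn.add (h : CanWinOn V j n a c) (hn : 0 < n) (ha : 0 < a) (i : ℕ) :
    CanWinOn V (j + i) n (n ^ i * a) (i * (n ^ (i + 1) * a) + c) := by
  induction i with
  | zero => simpa only [pow_zero, one_mul, zero_mul, zero_add, add_zero] using h
  | succ i ih =>
    have hmono : n ^ (i + 1) * a ≤ n ^ (i + 2) * a := by gcongr; omega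
    have hcost : n * (n * (n ^ i * a)) + (i * (n ^ (i + 1) * a) + c)
        ≤ (i + 1) * (n ^ (i + 2) * a) + c :=
      calc n * (n * (n ^ i * a)) + (i * (n ^ (i + 1) * a) + c)
          = n ^ (i + 2) * a + i * (n ^ (i + 1) * a) + c := by ring
        _ ≤ n ^ (i + 2) * a + i * (n ^ (i + 2) * a) + c := by gcongr
        _ = (i + 1) * (n ^ (i + 2) * a) + c := by ring
    intro X hX s
    refine (ih.succ (by positivity) X ?_ s).mono hcost
    rw [hX, pow_succ', mul_assoc]

theorem onlineRamsey_le (hn : 2 ≤ n) (ha : ramseyBound n k ≤ a) (i : ℕ) :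
    onlineRamsey (k + 1 + i) n ≤ i * (n ^ (i + 1) * a) + a.choose 2 := by
  have ha0 : 0 < a :=
    Nat.cast_pos.1 (zero_lt_one.trans_le ((one_le_ramseyBound hn k).trans ha))
  have hwin := (canWinOn_of_ramseyBound_le ℕ hn ha).add (by omega) ha0 i
  exact Nat.sInf_le (builderWins_of_canForce (hwin (range (n ^ i * a)) (card_range _) _))

theorem one_le_log_natCast (hn : 3 ≤ n) : 1 ≤ Real.log n := by
  rw [Real.le_log_iff_exp_le (by positivity)]
  have : (3 : ℝ) ≤ n := mod_cast hn
  linarith [Real.exp_one_lt_d9]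

theorem exists_natCast_between_ramseyBound (hn : 2 ≤ n) (k : ℕ) :
    ∃ a : ℕ, ramseyBound n (k + 1) ≤ a ∧ a ≤ 2 * 48 ^ k * ((n : ℝ) ^ (k + 1) / Real.log n ^ k) := by
  refine ⟨⌈ramseyBound n (k + 1)⌉₊, Nat.le_ceil _, ?_⟩
  calc (⌈ramseyBound n (k + 1)⌉₊ : ℝ) ≤ 2 * ramseyBound n (k + 1) :=
        Nat.ceil_le_two_mul (by linarith [one_le_ramseyBound hn (k + 1)])
    _ = 2 * 48 ^ k * ((n : ℝ) ^ (k + 1) / Real.log n ^ k) := by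
        rw [ramseyBound]
        ring

theorem onlineRamsey_le_mul_div_log_pow (hn : 3 ≤ n) (hki : k ≤ i) :
    (onlineRamsey (k + 2 + i) n : ℝ)
      ≤ (i * (2 * 48 ^ k) + (2 * 48 ^ k) ^ 2) * (n : ℝ) ^ (k + 2 + i) / Real.log n ^ k := by
  obtain ⟨a, hle, ha⟩ := exists_natCast_between_ramseyBound (n := n) (by omega) k
  have hlog := one_le_log_natCast hn
  have hn1 : (1 : ℝ) ≤ n := mod_cast (by omega : 1 ≤ n)
  set K : ℝ := 2 * 48 ^ k
  have hsq : ((n : ℝ) ^ (k + 1) / Real.log n ^ k) ^ 2 ≤ (n : ℝ) ^ (k + 2 + i) / Real.log n ^ k :=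
    calc ((n : ℝ) ^ (k + 1) / Real.log n ^ k) ^ 2
        = (n : ℝ) ^ (k + 2 + k) / (Real.log n ^ k * Real.log n ^ k) := by ring
      _ ≤ (n : ℝ) ^ (k + 2 + i) / (Real.log n ^ k * 1) := by
          gcongr
          exact one_le_pow₀ hlog
      _ = (n : ℝ) ^ (k + 2 + i) / Real.log n ^ k := by rw [mul_one]
  calc (onlineRamsey (k + 2 + i) n : ℝ)
      ≤ (i * (n ^ (i + 1) * a) + a.choose 2 : ℕ) :=
        mod_cast onlineRamsey_le (k := k + 1) (by omega) hle i
    _ ≤ i * (n ^ (i + 1) * a) + (a : ℝ) ^ 2 := by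
        push_cast
        gcongr
        exact_mod_cast Nat.choose_le_pow a 2
    _ ≤ i * (n ^ (i + 1) * (K * (n ^ (k + 1) / Real.log n ^ k)))
          + (K * (n ^ (k + 1) / Real.log n ^ k)) ^ 2 := by gcongr
    _ = i * K * (n ^ (k + 2 + i) / Real.log n ^ k)
          + K ^ 2 * (n ^ (k + 1) / Real.log n ^ k) ^ 2 := by ring
    _ ≤ i * K * (n ^ (k + 2 + i) / Real.log n ^ k)
          + K ^ 2 * (n ^ (k + 2 + i) / Real.log n ^ k) := by gcongr
    _ = (i * K + K ^ 2) * n ^ (k + 2 + i) / Real.log n ^ k := by ring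

end Strategy

theorem stmt4 (m : ℕ) (hm : 3 ≤ m) :
    ∃ C : ℝ, 0 < C ∧ ∃ n₀ : ℕ, ∀ n : ℕ, n₀ ≤ n →
      (onlineRamsey m n : ℝ) ≤ C * (n : ℝ) ^ m / (Real.log n) ^ (m / 2 - 1) := by
  obtain ⟨k, i, hk, hki, rfl⟩ : ∃ k i, m / 2 - 1 = k ∧ k ≤ i ∧ m = k + 2 + i :=
    ⟨m / 2 - 1, m - m / 2 - 1, rfl, by omega, by omega⟩
  rw [hk]
  exact ⟨i * (2 * 48 ^ k) + (2 * 48 ^ k) ^ 2, by positivity, 3, fun n hn =>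
    onlineRamsey_le_mul_div_log_pow hn hki⟩

end OnlineRamseyGame
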